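/- Let r,q ≥ 1 with rq > 1, and let μ_{rq}(i) := #{ j : i_j = i } be the Morse counts of σ_{rq}. Then μ_{rq}(i) = μ_{qr}(i) for all i ≥ 0, and μ_{rq}(i) = μ_{rq}(r+q−1−i) for all integers i with 0 ≤ i < r+q. -/

import Mathlib

/-- Morse numbers `i_j` of a permutation `σ` of `{1,…,N}` (extended to `ℕ`),
via the recursion `i_1 = 0`,
`i_{j+1} = i_j + (-1)^(j+1) * sign (σ⁻¹(j+1) - σ⁻¹(j))`. -/
def morse (σ : Equiv.Perm ℕ) : ℕ → ℤ
  | 0 => 0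
  | 1 => 0
  | (j+2) => morse σ (j+1) +
      (-1)^(j+2) * Int.sign ((σ.symm (j+2) : ℤ) - (σ.symm (j+1) : ℤ))

/-- Zero numbers `z_{j k}`, recursion in the first index `j`, second index `k` fixed:
`z_{1k} = 0`, `z_{kk} = i_k`, `z_{k+1,k} = min (i_k, i_{k+1})`, and otherwise
`z_{j+1,k} = z_{jk} + ((-1)^(j+1)/2) * (sign (σ⁻¹(j+1) - σ⁻¹(k)) - sign (σ⁻¹(j) - σ⁻¹(k)))`. -/
def zrec (σ : Equiv.Perm ℕ) (k : ℕ) : ℕ → ℤ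
  | 0 => 0
  | 1 => 0
  | (j+2) =>
      if j+2 = k then morse σ k
      else if j+1 = k then min (morse σ k) (morse σ (k+1))
      else zrec σ k (j+1) +
        ((-1)^(j+2) * (Int.sign ((σ.symm (j+2) : ℤ) - (σ.symm k : ℤ))
          - Int.sign ((σ.symm (j+1) : ℤ) - (σ.symm k : ℤ)))) / 2

/-- The zero number `z_{m n}`. -/
def zfun (σ : Equiv.Perm ℕ) (m n : ℕ) : ℤ := zrec σ n m

/-- The connection digraph of a dissipative Morse permutation `σ` of `{1,…,N}`:
an edge `m ⤳ n` iff `i_m = i_n + 1` and no `w` strictly between `m` and `n`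
blocks, i.e. satisfies `z_{mw} = z_{wn} = z_{mn}`. -/
def hasEdge (N : ℕ) (σ : Equiv.Perm ℕ) (m n : ℕ) : Prop :=
  1 ≤ m ∧ m ≤ N ∧ 1 ≤ n ∧ n ≤ N ∧
  morse σ m = morse σ n + 1 ∧
  ¬ ∃ w : ℕ, min m n < w ∧ w < max m n ∧
      zfun σ m w = zfun σ w n ∧ zfun σ w n = zfun σ m n

/-- A dissipative permutation of `{1,…,N}`. -/
def Dissipative (N : ℕ) (σ : Equiv.Perm ℕ) : Prop :=
  Set.BijOn σ (Set.Icc 1 N) (Set.Icc 1 N) ∧ σ 1 = 1 ∧ σ N = N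

/-- The Morse property: all Morse numbers are nonnegative. -/
def MorseProp (N : ℕ) (σ : Equiv.Perm ℕ) : Prop :=
  ∀ j, 1 ≤ j → j ≤ N → 0 ≤ morse σ j

/-- Morse counts `μ(i) = #{j ∈ {1,…,N} : i_j = i}`. -/
def morseCount (N : ℕ) (σ : Equiv.Perm ℕ) (i : ℤ) : ℕ :=
  ((Finset.Icc 1 N).filter (fun j => morse σ j = i)).card

/-- The primitive 3-nose permutation `σ_{rq}` of `{1,…,N}`, `N = 2(r+1)(q+1)-1`,
characterized by its defining relations, extended to a permutation of `ℕ`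
fixing everything outside `{1,…,N}`. -/
def SigmaRQ (r q : ℕ) (σ : Equiv.Perm ℕ) : Prop :=
  (∀ a, a ∉ Set.Icc 1 (2*(r+1)*(q+1) - 1) → σ a = a) ∧
  (∀ j k, j ≤ r → k ≤ q →
    σ (2*((q+1)*j+k)+1) = 2*(j+(r+1)*k)+1) ∧
  (∀ j k, j ≤ r → k ≤ q → ¬(j = 0 ∧ k = 0) →
    σ (2*((q+1)*(r-j)+(q-k)+1)) = 2*(j+(r+1)*k))

/-- Tags `A`, `B` of equilibrium labels `A^j_k`, `B^j_k`. -/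
inductive Tag | A | B
deriving DecidableEq

/-- The axis position (`h_1`-position) of the label `L^j_k` for parameters `(r,q)`. -/
def axisPos (r q : ℕ) : Tag → ℕ → ℕ → ℕ
  | Tag.A, j, k => if Odd j then (q+1)*(j-1)+k+1 else (q+1)*(2*r+1-j)+(q-k)+1
  | Tag.B, j, k => if Odd j then (q+1)*j+(q-k)+1 else (q+1)*(2*r-j)+k+1

/-- The meander position (`h_0`-position) of the label `L^j_k` for parameters `(r,q)`. -/
def meanderPos (r q : ℕ) : Tag → ℕ → ℕ → ℕ
  | Tag.A, j, k => if Odd k then (r+1)*(2*q+1-k)+(2*r+1-j) else (r+1)*k+j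
  | Tag.B, j, k => if Odd k then (r+1)*(2*q+1-k)+j else (r+1)*(k+1)+(r-j)

/-- The suspension `σ̃` of a dissipative permutation `σ` of `{1,…,N}`:
`σ̃(1) = 1`, `σ̃(N+2) = N+2`, and `σ̃(a+1) = N+2 - σ(a)` for `1 ≤ a ≤ N`. -/
def IsSuspension (N : ℕ) (σ σt : Equiv.Perm ℕ) : Prop :=
  σt 1 = 1 ∧ σt (N+2) = N+2 ∧ ∀ a, 1 ≤ a → a ≤ N → σt (a+1) = N+2 - σ a

/-- The label `A^0_0` is the distinguished (formal) vertex `⋆`. -/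
def IsStar (L : Tag) (j k : ℕ) : Prop := L = Tag.A ∧ j = 0 ∧ k = 0

/-- Tag swap `A ↔ B`, used by the reversor. -/
def tagSwap : Tag → Tag
  | Tag.A => Tag.B
  | Tag.B => Tag.A

/-!
Write the meander positions as a grid of `q + 1` rows of length `2 r + 2`. Along each row the Morse
numbers climb by `1` up to the middle and then descend, and the passage to the next row climbs in
the first half of the rows and descends in the second. Read through the labels `A^j_k`, `B^j_k`,
this says that `B^j_k` has Morse number `j + k` and `A^j_k` has Morse number `j + k - 1`. This
description is symmetric under exchanging `j` and `k`, and the reversor `A^j_k ↔ B^{r-j}_{q-k}`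
turns `i` into `r + q - 1 - i`. The formal vertex `A^0_0` would have Morse number `-1`, so it never
contributes to a count at `i ≥ 0`.
-/

theorem morse_add_one (σ : Equiv.Perm ℕ) {p : ℕ} (hp : 1 ≤ p) :
    morse σ (p + 1) = morse σ p +
      (-1) ^ (p + 1) * Int.sign ((σ.symm (p + 1) : ℤ) - (σ.symm p : ℤ)) := by
  obtain ⟨m, rfl⟩ := Nat.exists_eq_add_of_le' hp
  rfl

namespace SigmaRQ

variable {r q : ℕ} {σ : Equiv.Perm ℕ}

theorem symm_odd_column (hσ : SigmaRQ r q σ) {n k : ℕ} (hn : n ≤ 2 * r + 1) (hk : k ≤ q)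
    (hodd : Odd n) :
    (σ.symm (n + (2 * r + 2) * k) : ℤ) = (q + 1) * n + 2 * k - q := by
  obtain ⟨j, rfl⟩ := hodd
  have hpos : σ (2 * ((q + 1) * j + k) + 1) = 2 * j + 1 + (2 * r + 2) * k := by
    rw [hσ.2.1 j k (by omega) hk]; ring
  rw [← hpos, Equiv.symm_apply_apply]
  push_cast
  ring

theorem symm_even_column (hσ : SigmaRQ r q σ) {n k : ℕ} (hn : n ≤ 2 * r + 1) (hk : k ≤ q)
    (heven : Even n) (hp : 1 ≤ n + (2 * r + 2) * k) :
    (σ.symm (n + (2 * r + 2) * k) : ℤ) = 2 * (r + 1) * (q + 1) - ((q + 1) * n + 2 * k) := by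
  obtain ⟨j, rfl⟩ := heven
  have hjr : j ≤ r := by omega
  have hpos : σ (2 * ((q + 1) * (r - j) + (q - k) + 1)) = j + j + (2 * r + 2) * k := by
    rw [hσ.2.2 j k hjr hk (by rintro ⟨rfl, rfl⟩; simp at hp)]; ring
  rw [← hpos, Equiv.symm_apply_apply]
  push_cast [hjr, hk]
  ring

/- The term `(q + 1) n + 2 k` enters `σ⁻¹` with opposite signs in odd and even columns; this
cancels the factor `(-1) ^ (p + 1)` in the recursion for the Morse numbers. -/
theorem morse_add_one_eq_add_sign (hσ : SigmaRQ r q σ) {p n k n' k' : ℕ}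
    (hn : n ≤ 2 * r + 1) (hk : k ≤ q) (hn' : n' ≤ 2 * r + 1) (hk' : k' ≤ q) (hp : 1 ≤ p)
    (hpn : p = n + (2 * r + 2) * k) (hpn' : p + 1 = n' + (2 * r + 2) * k') :
    morse σ (p + 1) = morse σ p + Int.sign (2 * (r + 1) * (q + 1) + q
      - ((q + 1) * n + 2 * k) - ((q + 1) * n' + 2 * k')) := by
  have parity_n : Even p ↔ Even n := by simp [hpn, parity_simps]
  have parity_n' : Even (p + 1) ↔ Even n' := by simp [hpn', parity_simps]
  rw [morse_add_one σ hp]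
  congr 1
  rcases Nat.even_or_odd p with heven | hodd
  · have symm_p := hσ.symm_even_column hn hk (parity_n.1 heven) (hpn ▸ hp)
    have symm_p' := hσ.symm_odd_column hn' hk'
      (by rw [← Nat.not_even_iff_odd, ← parity_n']; simpa [parity_simps] using heven)
    rw [← hpn] at symm_p
    rw [← hpn'] at symm_p'
    rw [heven.add_one.neg_one_pow, neg_one_mul, ← Int.sign_neg, symm_p, symm_p']
    congr 1
    ring
  · have symm_p := hσ.symm_odd_column hn hk
      (by rwa [← Nat.not_even_iff_odd, ← parity_n, Nat.not_even_iff_odd])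
    have symm_p' := hσ.symm_even_column hn' hk' (parity_n'.1 hodd.add_one) (by omega)
    rw [← hpn] at symm_p
    rw [← hpn'] at symm_p'
    rw [hodd.add_one.neg_one_pow, one_mul, symm_p, symm_p']
    congr 1
    ring

theorem morse_add_one_of_row (hσ : SigmaRQ r q σ) {n k : ℕ} (hn : n < 2 * r + 1) (hk : k ≤ q)
    (hp : 1 ≤ n + (2 * r + 2) * k) :
    morse σ (n + (2 * r + 2) * k + 1) = morse σ (n + (2 * r + 2) * k) +
      if n < r ∨ n = r ∧ 2 * k ≤ q then 1 else -1 := by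
  rw [hσ.morse_add_one_eq_add_sign hn.le hk hn hk hp rfl (add_right_comm _ _ _)]
  congr 1
  have factored : 2 * (r + 1) * (q + 1) + q - ((q + 1) * n + 2 * k)
      - ((q + 1) * (n + 1 : ℕ) + 2 * k) = 2 * ((q + 1) * (r - n) + q - 2 * k : ℤ) + 1 := by
    push_cast
    ring
  rw [factored]
  split_ifs with hup
  · apply Int.sign_eq_one_of_pos
    rcases hup with hlt | ⟨rfl, hkq⟩
    · have : (1 : ℤ) ≤ r - n := by omega
      nlinarith
    · rw [sub_self, mul_zero]
      omega
  · apply Int.sign_eq_neg_one_of_neg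
    rcases lt_trichotomy n r with hlt | rfl | hgt
    · exact absurd (Or.inl hlt) hup
    · rw [sub_self, mul_zero]
      omega
    · have : (r : ℤ) - n ≤ -1 := by omega
      nlinarith

theorem morse_add_one_of_row_end (hσ : SigmaRQ r q σ) {k : ℕ} (hk : k + 1 ≤ q) :
    morse σ (2 * r + 1 + (2 * r + 2) * k + 1) = morse σ (2 * r + 1 + (2 * r + 2) * k) +
      if 2 * k < q then 1 else -1 := by
  rw [hσ.morse_add_one_eq_add_sign le_rfl (by omega) (Nat.zero_le _) hk (by omega) rfl (by ring)]
  congr 1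
  have factored : 2 * (r + 1) * (q + 1) + q - ((q + 1) * (2 * r + 1 : ℕ) + 2 * k)
      - ((q + 1) * (0 : ℕ) + 2 * (k + 1 : ℕ)) = 2 * ((q : ℤ) - 2 * k) - 1 := by
    push_cast
    ring
  rw [factored]
  split_ifs with hup
  · exact Int.sign_eq_one_of_pos (by omega)
  · exact Int.sign_eq_neg_one_of_neg (by omega)

end SigmaRQ

/-- The Morse number of `σ_{rq}` at the meander position in column `n ≤ 2 r + 1` and row `k ≤ q`,
that is at `n + (2 r + 2) k`. Position `0`, which carries the formal vertex `⋆`, gets `-1`. -/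
def gridIndex (r q n k : ℕ) : ℤ :=
  if 2 * k ≤ q then 2 * k + min ((n : ℤ) - 1) (2 * r + 1 - n)
  else 2 * ((q : ℤ) - k) + min ((n : ℤ) + 1) (2 * r + 1 - n)

theorem gridIndex_column_add_one (r q n k : ℕ) :
    gridIndex r q (n + 1) k =
      gridIndex r q n k + if n < r ∨ n = r ∧ 2 * k ≤ q then 1 else -1 := by
  unfold gridIndex
  split_ifs <;> omega

theorem gridIndex_row_add_one (r q k : ℕ) :
    gridIndex r q 0 (k + 1) =
      gridIndex r q (2 * r + 1) k + if 2 * k < q then 1 else -1 := by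
  unfold gridIndex
  split_ifs <;> omega

theorem SigmaRQ.morse_eq_gridIndex {r q : ℕ} {σ : Equiv.Perm ℕ} (hσ : SigmaRQ r q σ) {n k : ℕ}
    (hn : n ≤ 2 * r + 1) (hk : k ≤ q) (hp : 1 ≤ n + (2 * r + 2) * k) :
    morse σ (n + (2 * r + 2) * k) = gridIndex r q n k := by
  obtain ⟨p, hpn⟩ : ∃ p, p = n + (2 * r + 2) * k := ⟨_, rfl⟩
  rw [← hpn] at hp ⊢
  induction p, hp using Nat.le_induction generalizing n k with
  | base =>
    obtain rfl : k = 0 := by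
      by_contra hk0
      nlinarith [Nat.pos_of_ne_zero hk0]
    obtain rfl : n = 1 := by omega
    simp [morse, gridIndex]
  | succ p hp ih =>
    rcases n with _ | n
    · rcases k with _ | k
      · omega
      · obtain rfl : p = 2 * r + 1 + (2 * r + 2) * k := by linarith
        rw [hσ.morse_add_one_of_row_end hk, ih le_rfl (by omega) rfl, gridIndex_row_add_one]
    · obtain rfl : p = n + (2 * r + 2) * k := by omega
      rw [hσ.morse_add_one_of_row (by omega) hk hp, ih (by omega) hk rfl, gridIndex_column_add_one]

/-- The column of the grid that contains the meander position of the label `L^j_k`. -/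
def meanderColumn (r : ℕ) : Tag → ℕ → ℕ → ℕ
  | Tag.A, j, k => if Odd k then 2 * r + 1 - j else j
  | Tag.B, j, k => if Odd k then j else 2 * r + 1 - j

/-- The row of the grid that contains the meander position of any label `L^j_k`: even `k` fill the
lower half of the rows upwards, odd `k` the upper half downwards. -/
def meanderRow (q k : ℕ) : ℕ :=
  if Odd k then q - k / 2 else k / 2

/-- The Morse number carried by the label `L^j_k`. -/
def labelIndex : Tag → ℕ → ℕ → ℤ
  | Tag.A, j, k => j + k - 1
  | Tag.B, j, k => j + k

section Labels

variable {r q j k : ℕ}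

theorem meanderColumn_le (L : Tag) (hj : j ≤ r) : meanderColumn r L j k ≤ 2 * r + 1 := by
  cases L <;> simp only [meanderColumn] <;> split_ifs <;> omega

theorem meanderColumn_inj {L L' : Tag} {j' : ℕ} (hj : j ≤ r) (hj' : j' ≤ r)
    (h : meanderColumn r L j k = meanderColumn r L' j' k) : L = L' ∧ j = j' := by
  cases L <;> cases L' <;> simp only [meanderColumn, reduceCtorEq, true_and, false_and] at h ⊢ <;>
    split_ifs at h <;> omega

theorem meanderRow_le (hk : k ≤ q) : meanderRow q k ≤ q := by
  unfold meanderRow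
  split_ifs <;> omega

theorem meanderRow_inj {k' : ℕ} (hk : k ≤ q) (hk' : k' ≤ q)
    (h : meanderRow q k = meanderRow q k') : k = k' := by
  simp only [meanderRow, Nat.odd_iff] at h
  split_ifs at h <;> omega

theorem meanderPos_eq_column_add_row (L : Tag) (hj : j ≤ r) (hk : k ≤ q) :
    meanderPos r q L j k = meanderColumn r L j k + (2 * r + 2) * meanderRow q k := by
  have row_odd (h : Odd k) : (r + 1) * (2 * q + 1 - k) = (2 * r + 2) * (q - k / 2) := by
    rw [show 2 * q + 1 - k = 2 * (q - k / 2) by grind]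
    ring
  have row_even (h : ¬Odd k) : (r + 1) * k = (2 * r + 2) * (k / 2) := by
    nth_rw 1 [← Nat.two_mul_div_two_of_even (Nat.not_odd_iff_even.1 h)]
    ring
  cases L <;> simp only [meanderPos, meanderColumn, meanderRow] <;> split_ifs with hodd
  · rw [row_odd hodd, add_comm]
  · rw [row_even hodd, add_comm]
  · rw [row_odd hodd, add_comm]
  · rw [mul_add_one, row_even hodd]
    omega

theorem gridIndex_meander (L : Tag) (hj : j ≤ r) (hk : k ≤ q) :
    gridIndex r q (meanderColumn r L j k) (meanderRow q k) = labelIndex L j k := by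
  cases L <;> simp only [gridIndex, meanderColumn, meanderRow, labelIndex, Nat.odd_iff] <;>
    split_ifs <;> omega

theorem meanderPos_pos {L : Tag} (hj : j ≤ r) (hk : k ≤ q) (hL : ¬IsStar L j k) :
    1 ≤ meanderPos r q L j k := by
  by_contra! h
  rw [meanderPos_eq_column_add_row L hj hk] at h
  have column_zero : meanderColumn r L j k = 0 := by omega
  have row_zero : meanderRow q k = 0 := by
    by_contra h0
    nlinarith [Nat.pos_of_ne_zero h0]
  apply hL
  cases L <;> simp only [meanderColumn, meanderRow, IsStar, Nat.odd_iff, reduceCtorEq, true_and,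
    false_and] at * <;> split_ifs at * <;> omega

theorem SigmaRQ.morse_meanderPos {σ : Equiv.Perm ℕ} (hσ : SigmaRQ r q σ) {L : Tag} (hj : j ≤ r)
    (hk : k ≤ q) (hL : ¬IsStar L j k) :
    morse σ (meanderPos r q L j k) = labelIndex L j k := by
  have hpos := meanderPos_pos hj hk hL
  rw [meanderPos_eq_column_add_row L hj hk] at hpos ⊢
  rw [hσ.morse_eq_gridIndex (meanderColumn_le L hj) (meanderRow_le hk) hpos,
    gridIndex_meander L hj hk]

end Labels

/-- All labels `L^j_k` with `j ≤ r` and `k ≤ q`, including the formal vertex `⋆`, encoded as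
triples `(L, j, k)`. -/
def labels (r q : ℕ) : Finset (Tag × ℕ × ℕ) :=
  {Tag.A, Tag.B} ×ˢ Finset.range (r + 1) ×ˢ Finset.range (q + 1)

/-- The labels that carry the Morse number `i`. -/
def labelsOfIndex (r q : ℕ) (i : ℤ) : Finset (Tag × ℕ × ℕ) :=
  (labels r q).filter fun x => labelIndex x.1 x.2.1 x.2.2 = i

section Counting

variable {r q : ℕ}

theorem mem_labels {L : Tag} {j k : ℕ} : (L, j, k) ∈ labels r q ↔ j ≤ r ∧ k ≤ q := by
  cases L <;> simp [labels]

theorem mem_labelsOfIndex {i : ℤ} {L : Tag} {j k : ℕ} :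
    (L, j, k) ∈ labelsOfIndex r q i ↔ (j ≤ r ∧ k ≤ q) ∧ labelIndex L j k = i := by
  rw [labelsOfIndex, Finset.mem_filter, mem_labels]

theorem card_labels : (labels r q).card = 2 * (r + 1) * (q + 1) := by
  simp [labels, mul_assoc]

theorem meanderPos_injOn :
    Set.InjOn (fun x : Tag × ℕ × ℕ => meanderPos r q x.1 x.2.1 x.2.2) (labels r q) := by
  rintro ⟨L, j, k⟩ hx ⟨L', j', k'⟩ hx' heq
  obtain ⟨hj, hk⟩ := mem_labels.1 hx
  obtain ⟨hj', hk'⟩ := mem_labels.1 hx'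
  simp only [meanderPos_eq_column_add_row, hj, hk, hj', hk'] at heq
  have hcolumn := meanderColumn_le (k := k) L hj
  have hcolumn' := meanderColumn_le (k := k') L' hj'
  have column_eq : meanderColumn r L j k = meanderColumn r L' j' k' := by
    simpa [Nat.add_mul_mod_self_left, Nat.mod_eq_of_lt (Nat.lt_succ_of_le hcolumn),
      Nat.mod_eq_of_lt (Nat.lt_succ_of_le hcolumn')] using congrArg (· % (2 * r + 2)) heq
  have row_eq : meanderRow q k = meanderRow q k' := by
    rw [column_eq] at heq
    exact Nat.eq_of_mul_eq_mul_left (by omega) (Nat.add_left_cancel heq)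
  obtain rfl := meanderRow_inj hk hk' row_eq
  obtain ⟨rfl, rfl⟩ := meanderColumn_inj hj hj' column_eq
  rfl

theorem image_meanderPos_labels :
    (labels r q).image (fun x => meanderPos r q x.1 x.2.1 x.2.2) =
      Finset.range (2 * (r + 1) * (q + 1)) := by
  apply Finset.eq_of_subset_of_card_le
  · intro p hp
    obtain ⟨⟨L, j, k⟩, hx, rfl⟩ := Finset.mem_image.1 hp
    obtain ⟨hj, hk⟩ := mem_labels.1 hx
    have hcolumn := meanderColumn_le (k := k) L hj
    have hrow := meanderRow_le hk
    rw [Finset.mem_range, meanderPos_eq_column_add_row L hj hk]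
    nlinarith
  · rw [Finset.card_image_of_injOn meanderPos_injOn, card_labels, Finset.card_range]

theorem SigmaRQ.morseCount_eq_card_labelsOfIndex {σ : Equiv.Perm ℕ} (hσ : SigmaRQ r q σ) {i : ℤ}
    (hi : 0 ≤ i) :
    morseCount (2 * (r + 1) * (q + 1) - 1) σ i = (labelsOfIndex r q i).card := by
  symm
  apply Finset.card_nbij fun x => meanderPos r q x.1 x.2.1 x.2.2
  · rintro ⟨L, j, k⟩ hx
    obtain ⟨⟨hj, hk⟩, rfl⟩ := mem_labelsOfIndex.1 hx
    have hL : ¬IsStar L j k := by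
      rintro ⟨rfl, rfl, rfl⟩
      simp [labelIndex] at hi
    have hlt : meanderPos r q L j k ∈ Finset.range (2 * (r + 1) * (q + 1)) :=
      image_meanderPos_labels ▸ Finset.mem_image_of_mem _ (mem_labels.2 ⟨hj, hk⟩)
    simp only [Finset.coe_filter, Set.mem_ofPred_eq, Finset.mem_Icc]
    exact ⟨⟨meanderPos_pos hj hk hL, Nat.le_sub_one_of_lt (Finset.mem_range.1 hlt)⟩,
      hσ.morse_meanderPos hj hk hL⟩
  · exact meanderPos_injOn.mono (Finset.filter_subset _ _)
  · intro p hp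
    simp only [Finset.coe_filter, Set.mem_ofPred_eq, Finset.mem_Icc] at hp
    obtain ⟨⟨hp1, hpN⟩, hpi⟩ := hp
    have hmem : p ∈ Finset.range (2 * (r + 1) * (q + 1)) := Finset.mem_range.2 (by omega)
    rw [← image_meanderPos_labels] at hmem
    obtain ⟨⟨L, j, k⟩, hx, rfl⟩ := Finset.mem_image.1 hmem
    obtain ⟨hj, hk⟩ := mem_labels.1 hx
    have hL : ¬IsStar L j k := by
      rintro ⟨rfl, rfl, rfl⟩
      simp [meanderPos] at hp1
    exact ⟨(L, j, k),
      mem_labelsOfIndex.2 ⟨⟨hj, hk⟩, (hσ.morse_meanderPos hj hk hL).symm.trans hpi⟩, rfl⟩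

theorem labelIndex_comm (L : Tag) (j k : ℕ) : labelIndex L j k = labelIndex L k j := by
  cases L <;> simp only [labelIndex, add_comm]

theorem card_labelsOfIndex_comm (r q : ℕ) (i : ℤ) :
    (labelsOfIndex r q i).card = (labelsOfIndex q r i).card := by
  refine Finset.card_equiv ((Equiv.refl Tag).prodCongr (Equiv.prodComm ℕ ℕ)) ?_
  rintro ⟨L, j, k⟩
  simp only [Equiv.prodCongr_apply, Prod.map, Equiv.refl_apply, Equiv.prodComm_apply, Prod.swap,
    mem_labelsOfIndex, labelIndex_comm L k j, and_comm (a := j ≤ r)]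

/-- The reversor `A^j_k ↔ B^{r-j}_{q-k}` on labels; it reflects the Morse numbers. -/
def reverseLabel (r q : ℕ) (x : Tag × ℕ × ℕ) : Tag × ℕ × ℕ :=
  (tagSwap x.1, r - x.2.1, q - x.2.2)

theorem labelIndex_reverse (L : Tag) {j k : ℕ} (hj : j ≤ r) (hk : k ≤ q) :
    labelIndex (tagSwap L) (r - j) (q - k) = r + q - 1 - labelIndex L j k := by
  cases L <;> simp only [tagSwap, labelIndex] <;> omega

theorem reverseLabel_mem_labelsOfIndex {i : ℤ} {x : Tag × ℕ × ℕ} (hx : x ∈ labelsOfIndex r q i) :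
    reverseLabel r q x ∈ labelsOfIndex r q (r + q - 1 - i) := by
  obtain ⟨L, j, k⟩ := x
  obtain ⟨⟨hj, hk⟩, rfl⟩ := mem_labelsOfIndex.1 hx
  exact mem_labelsOfIndex.2 ⟨⟨r.sub_le j, q.sub_le k⟩, labelIndex_reverse L hj hk⟩

theorem reverseLabel_reverseLabel {x : Tag × ℕ × ℕ} (hx : x ∈ labels r q) :
    reverseLabel r q (reverseLabel r q x) = x := by
  obtain ⟨L, j, k⟩ := x
  obtain ⟨hj, hk⟩ := mem_labels.1 hx
  cases L <;> simp only [reverseLabel, tagSwap, Nat.sub_sub_self hj, Nat.sub_sub_self hk]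

theorem card_labelsOfIndex_reverse (r q : ℕ) (i : ℤ) :
    (labelsOfIndex r q i).card = (labelsOfIndex r q (r + q - 1 - i)).card := by
  refine Finset.card_nbij' (reverseLabel r q) (reverseLabel r q)
    (fun _ => reverseLabel_mem_labelsOfIndex) (fun x hx => ?_)
    (fun _ hx => reverseLabel_reverseLabel (Finset.mem_filter.1 hx).1)
    (fun _ hx => reverseLabel_reverseLabel (Finset.mem_filter.1 hx).1)
  simpa only [Finset.mem_coe, sub_sub_cancel] using reverseLabel_mem_labelsOfIndex hx

end Counting

/-- symmetry of the Morse counts: `μ_{rq} = μ_{qr}`, and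
`μ_{rq}(i) = μ_{rq}(r+q-1-i)` for `0 ≤ i < r+q`. -/
theorem stmt_3 (r q : ℕ) (hr : 1 ≤ r) (hq : 1 ≤ q) (hrq : 1 < r*q)
    (σ σ' : Equiv.Perm ℕ) (hσ : SigmaRQ r q σ) (hσ' : SigmaRQ q r σ') :
    (∀ i : ℕ, morseCount (2*(r+1)*(q+1)-1) σ i
      = morseCount (2*(r+1)*(q+1)-1) σ' i) ∧
    (∀ i : ℕ, i < r+q → morseCount (2*(r+1)*(q+1)-1) σ i
      = morseCount (2*(r+1)*(q+1)-1) σ (((r+q-1-i : ℕ) : ℤ))) := by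
  have hN : 2*(r+1)*(q+1)-1 = 2*(q+1)*(r+1)-1 := by rw [mul_right_comm]
  refine ⟨fun i => ?_, fun i hi => ?_⟩
  · rw [hσ.morseCount_eq_card_labelsOfIndex i.cast_nonneg, hN,
      hσ'.morseCount_eq_card_labelsOfIndex i.cast_nonneg, card_labelsOfIndex_comm]
  · have cast_reflection : ((r+q-1-i : ℕ) : ℤ) = r + q - 1 - i := by omega
    rw [hσ.morseCount_eq_card_labelsOfIndex i.cast_nonneg,
      hσ.morseCount_eq_card_labelsOfIndex (Int.natCast_nonneg _), cast_reflection,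
      card_labelsOfIndex_reverse]
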